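/- Let G be a group, Λ ⊆ G, and C ≥ 1. Suppose R_Λ = {(s,t) ∈ G × G : st ∈ Λ} admits a partition R_Λ = Γ₁ ∪ Γ₂ (disjoint) with sup_{s∈G} |{t : (s,t) ∈ Γ₁}| ≤ C and sup_{t∈G} |{s : (s,t) ∈ Γ₂}| ≤ C. Then for every complex Hilbert space H and every finitely supported function a : G → B(H) with a(x) = 0 for x ∉ Λ, ‖Σ_{x∈Λ} λ(x) ⊗ a(x)‖ ≤ 2√C · max{ ‖Σ_{x} a(x)* a(x)‖^{1/2}, ‖Σ_{x} a(x) a(x)*‖^{1/2} }, where Σ_{x} λ(x) ⊗ a(x) denotes the operator T on ℓ²(G; H) given by (T f)(s) = Σ_{x∈G} a(x) f(x⁻¹ s). -/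

import Mathlib

open scoped ENNReal NNReal
open MeasureTheory ContinuousLinearMap

noncomputable section

/-- `ψ : S × T → ℂ` is a Schur multiplier of norm at most `C`: for every bounded operator
`A : ℓ²(S) → ℓ²(T)` there is a bounded `B : ℓ²(S) → ℓ²(T)` whose matrix entries are
`ψ(s,t) · A(s,t)` and with `‖B‖ ≤ C‖A‖`. -/
def IsSchurMultiplier {S T : Type*} (ψ : S × T → ℂ) (C : ℝ) : Prop :=
  letI := Classical.decEq S
  letI := Classical.decEq T
  ∀ A : lp (fun _ : S => ℂ) 2 →L[ℂ] lp (fun _ : T => ℂ) 2,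
    ∃ B : lp (fun _ : S => ℂ) 2 →L[ℂ] lp (fun _ : T => ℂ) 2,
      (∀ (s : S) (t : T),
        (inner (𝕜 := ℂ) (lp.single 2 t 1) (B (lp.single 2 s 1)))
          = ψ (s, t) * inner (𝕜 := ℂ) (lp.single 2 t 1) (A (lp.single 2 s 1))) ∧
      ‖B‖ ≤ C * ‖A‖

lemma aux_count {G : Type*} (C : ℝ) (hC : 0 ≤ C) (P : Set G)
    (h : (P.encard : ℝ≥0∞) ≤ ENNReal.ofReal C) (F : Finset G) (φ : G → G)
    (hφ : Function.Injective φ) (hF : ∀ x ∈ F, φ x ∈ P) : (F.card : ℝ) ≤ C := by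
  have h0 : ((F : Set G)).encard ≤ P.encard := by
    rw [← hφ.encard_image]
    apply Set.encard_le_encard
    rintro _ ⟨x, hx, rfl⟩
    exact hF x hx
  rw [Set.encard_coe_eq_coe_finsetCard] at h0
  have h3 : ((F.card : ℕ∞) : ℝ≥0∞) ≤ ENNReal.ofReal C :=
    le_trans (ENat.toENNReal_le.2 h0) h
  rw [ENat.toENNReal_coe] at h3
  have := ENNReal.toReal_mono ENNReal.ofReal_ne_top h3
  rwa [ENNReal.toReal_ofReal hC, ENNReal.toReal_natCast] at this

lemma aux_sq {G H : Type*} [NormedAddCommGroup H] [InnerProductSpace ℂ H] [CompleteSpace H]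
    (S : Finset G) (b : G → (H →L[ℂ] H)) (v : H) :
    ∑ x ∈ S, ‖b x v‖ ^ 2 ≤
      ‖∑ x ∈ S, (ContinuousLinearMap.adjoint (b x)).comp (b x)‖ * ‖v‖ ^ 2 := by
  have h : ∑ x ∈ S, ‖b x v‖ ^ 2 =
      RCLike.re (inner ℂ ((∑ x ∈ S, (ContinuousLinearMap.adjoint (b x)).comp (b x)) v) v) := by
    rw [_root_.sum_apply, sum_inner, map_sum]
    refine Finset.sum_congr rfl fun x _ => ?_
    rw [ContinuousLinearMap.comp_apply, ContinuousLinearMap.adjoint_inner_left,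
      inner_self_eq_norm_sq]
  rw [h]
  refine (RCLike.re_le_norm _).trans ((norm_inner_le_norm _ _).trans ?_)
  rw [pow_two, ← mul_assoc]
  gcongr
  exact ContinuousLinearMap.le_opNorm _ _

lemma aux_lp {G H : Type*} [NormedAddCommGroup H] (f : lp (fun _ : G => H) 2) (F : Finset G) :
    ∑ s ∈ F, ‖f s‖ ^ 2 ≤ ‖f‖ ^ 2 := by
  have := lp.sum_rpow_le_norm_rpow (p := 2) (by norm_num) f F
  simpa using this

lemma aux_cs {ι : Type*} (D : Finset ι) (p q : ι → ℝ) (A B : ℝ)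
    (hA : ∑ i ∈ D, p i ^ 2 ≤ A) (hB : ∑ i ∈ D, q i ^ 2 ≤ B) :
    ∑ i ∈ D, p i * q i ≤ √A * √B :=
  (Real.sum_mul_le_sqrt_mul_sqrt D p q).trans (by gcongr)

/-- change of variables bound -/
lemma aux_shift {G : Type*} [Group G] (F S : Finset G) (h : G → G → ℝ)
    (h0 : ∀ x u, 0 ≤ h x u) :
    ∃ U : Finset G, ∑ x ∈ S, ∑ s ∈ F, h x (x⁻¹ * s) ≤ ∑ u ∈ U, ∑ x ∈ S, h x u := by
  classical
  refine ⟨Finset.image₂ (fun x s => x⁻¹ * s) S F, ?_⟩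
  rw [Finset.sum_comm (s := Finset.image₂ _ _ _)]
  refine Finset.sum_le_sum fun x hx => ?_
  rw [← Finset.sum_image (s := F) (g := fun s => x⁻¹ * s) (f := h x)
    (fun _ _ _ _ e => mul_left_cancel e)]
  refine Finset.sum_le_sum_of_subset_of_nonneg ?_ (fun _ _ _ => h0 _ _)
  intro u hu
  obtain ⟨s, hs, rfl⟩ := Finset.mem_image.1 hu
  exact Finset.mem_image₂_of_mem hx hs

/-- if `R_Λ = {(s,t) : st ∈ Λ}` admits a disjoint partition `Γ₁ ∪ Γ₂` with rows
of `Γ₁` and columns of `Γ₂` of cardinality at most `C` (`C ≥ 1`), then for every Hilbert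
space `H` and finitely supported `a : G → B(H)` vanishing off `Λ`, the operator
`Σ_{x∈Λ} λ(x) ⊗ a(x)` on `ℓ²(G;H)` has norm at most
`2√C · max{‖Σ a(x)*a(x)‖^{1/2}, ‖Σ a(x)a(x)*‖^{1/2}}`. -/
theorem stmt_9 {G : Type*} [Group G] (Λ : Set G) (C : ℝ) (hC : 1 ≤ C)
    (Γ₁ Γ₂ : Set (G × G))
    (hU : Γ₁ ∪ Γ₂ = {p : G × G | p.1 * p.2 ∈ Λ}) (hD : Disjoint Γ₁ Γ₂)
    (h1 : ∀ s : G, ({t : G | (s, t) ∈ Γ₁}.encard : ℝ≥0∞) ≤ ENNReal.ofReal C)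
    (h2 : ∀ t : G, ({s : G | (s, t) ∈ Γ₂}.encard : ℝ≥0∞) ≤ ENNReal.ofReal C)
    (H : Type*) [NormedAddCommGroup H] [InnerProductSpace ℂ H] [CompleteSpace H]
    (a : G →₀ (H →L[ℂ] H)) (ha : ∀ x ∉ Λ, a x = 0)
    (T : lp (fun _ : G => H) 2 →L[ℂ] lp (fun _ : G => H) 2)
    (hT : ∀ (f : lp (fun _ : G => H) 2) (s : G),
      T f s = ∑ x ∈ a.support, (a x) (f (x⁻¹ * s))) :
    ‖T‖ ≤ 2 * Real.sqrt C * max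
      (Real.sqrt ‖∑ x ∈ a.support, (ContinuousLinearMap.adjoint (a x)).comp (a x)‖)
      (Real.sqrt ‖∑ x ∈ a.support, (a x).comp (ContinuousLinearMap.adjoint (a x))‖) := by
  classical
  have hC0 : 0 ≤ C := by linarith
  set S := a.support with hS
  set A := ‖∑ x ∈ S, (ContinuousLinearMap.adjoint (a x)).comp (a x)‖ with hA
  set B := ‖∑ x ∈ S, (a x).comp (ContinuousLinearMap.adjoint (a x))‖ with hB
  have hA0 : 0 ≤ A := norm_nonneg _
  have hB0 : 0 ≤ B := norm_nonneg _
  have hsqB : ∀ v : H, ∑ x ∈ S, ‖(ContinuousLinearMap.adjoint (a x)) v‖ ^ 2 ≤ B * ‖v‖ ^ 2 := by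
    intro v
    have := aux_sq S (fun x => ContinuousLinearMap.adjoint (a x)) v
    simpa only [ContinuousLinearMap.adjoint_adjoint] using this
  have hfin : ∀ (f g : lp (fun _ : G => H) 2) (F : Finset G),
      ‖∑ s ∈ F, inner ℂ (g s) (T f s)‖ ≤ (√C * √A + √C * √B) * ‖f‖ * ‖g‖ := by
    intro f g F
    have e1 : ∑ s ∈ F, inner ℂ (g s) (T f s) =
        ∑ p ∈ F ×ˢ S, inner ℂ (g p.1) (a p.2 (f (p.2⁻¹ * p.1))) := by
      rw [Finset.sum_product]
      refine Finset.sum_congr rfl fun s _ => ?_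
      rw [hT, inner_sum]
    rw [e1, ← Finset.sum_filter_add_sum_filter_not (F ×ˢ S)
      (fun p => (p.1, p.1⁻¹ * p.2) ∈ Γ₁)]
    refine (norm_add_le _ _).trans ?_
    have k1 : ‖∑ p ∈ (F ×ˢ S).filter (fun p => (p.1, p.1⁻¹ * p.2) ∈ Γ₁),
        inner ℂ (g p.1) (a p.2 (f (p.2⁻¹ * p.1)))‖ ≤ √(C * ‖g‖ ^ 2) * √(A * ‖f‖ ^ 2) := by
      refine (norm_sum_le _ _).trans ((Finset.sum_le_sum
        (fun p _ => norm_inner_le_norm _ _)).trans (aux_cs _ _ _ _ _ ?_ ?_))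
      · rw [Finset.sum_filter, Finset.sum_product]
        refine le_trans (Finset.sum_le_sum (g := fun s => C * ‖g s‖ ^ 2) fun s _ => ?_) ?_
        · rw [← Finset.sum_filter]
          dsimp only
          rw [Finset.sum_const, nsmul_eq_mul]
          gcongr
          refine aux_count C hC0 _ (h1 s) _ (fun x => s⁻¹ * x) (mul_right_injective _) ?_
          intro x hx
          exact (Finset.mem_filter.1 hx).2
        · rw [← Finset.mul_sum]
          gcongr
          exact aux_lp g F
      · refine (Finset.sum_le_sum_of_subset_of_nonneg (Finset.filter_subset _ _)
          (fun _ _ _ => by positivity)).trans ?_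
        rw [Finset.sum_product_right]
        obtain ⟨U, hU'⟩ := aux_shift F S (fun x u => ‖a x (f u)‖ ^ 2) (fun _ _ => by positivity)
        refine hU'.trans ((Finset.sum_le_sum fun u _ => aux_sq S a (f u)).trans ?_)
        rw [← Finset.mul_sum]
        gcongr
        exact aux_lp f U
    have k2 : ‖∑ p ∈ (F ×ˢ S).filter (fun p => ¬ (p.1, p.1⁻¹ * p.2) ∈ Γ₁),
        inner ℂ (g p.1) (a p.2 (f (p.2⁻¹ * p.1)))‖ ≤ √(B * ‖g‖ ^ 2) * √(C * ‖f‖ ^ 2) := by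
      refine (norm_sum_le _ _).trans ((Finset.sum_le_sum
        (fun p _ => ?_)).trans (aux_cs _
          (fun p => ‖(ContinuousLinearMap.adjoint (a p.2)) (g p.1)‖)
          (fun p => ‖f (p.2⁻¹ * p.1)‖) _ _ ?_ ?_))
      · rw [← ContinuousLinearMap.adjoint_inner_left]
        exact norm_inner_le_norm _ _
      · refine (Finset.sum_le_sum_of_subset_of_nonneg (Finset.filter_subset _ _)
          (fun _ _ _ => by positivity)).trans ?_
        rw [Finset.sum_product]
        refine (Finset.sum_le_sum fun s _ => hsqB (g s)).trans ?_
        rw [← Finset.mul_sum]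
        gcongr
        exact aux_lp g F
      · rw [Finset.sum_filter, Finset.sum_product_right]
        obtain ⟨U, hU'⟩ := aux_shift F S
          (fun x u => if (x * u, u⁻¹) ∉ Γ₁ then ‖f u‖ ^ 2 else 0)
          (fun _ _ => by positivity)
        refine le_trans (le_of_eq ?_) (hU'.trans (le_trans
          (Finset.sum_le_sum (g := fun u => C * ‖f u‖ ^ 2) fun u _ => ?_) ?_))
        · refine Finset.sum_congr rfl fun x _ => Finset.sum_congr rfl fun s _ => ?_
          simp
        · rw [← Finset.sum_filter, Finset.sum_const, nsmul_eq_mul]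
          gcongr
          refine aux_count C hC0 _ (h2 u⁻¹) _ (fun x => x * u) (mul_left_injective _) ?_
          intro x hx
          obtain ⟨hx1, hx2⟩ := Finset.mem_filter.1 hx
          have hxΛ : x ∈ Λ := by
            by_contra hn
            exact (Finsupp.mem_support_iff.1 hx1) (ha x hn)
          have hm : (x * u, u⁻¹) ∈ Γ₁ ∪ Γ₂ := by
            rw [hU]
            simpa using hxΛ
          exact hm.resolve_left hx2
        · rw [← Finset.mul_sum]
          gcongr
          exact aux_lp f U
    refine (add_le_add k1 k2).trans (le_of_eq ?_)
    rw [Real.sqrt_mul hC0, Real.sqrt_mul hA0, Real.sqrt_mul hB0, Real.sqrt_mul hC0,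
      Real.sqrt_sq (norm_nonneg _), Real.sqrt_sq (norm_nonneg _)]
    ring
  have hK : ‖T‖ ≤ √C * √A + √C * √B := by
    refine ContinuousLinearMap.opNorm_le_bound _ (by positivity) fun f => ?_
    have hi : ‖inner ℂ (T f) (T f)‖ ≤ (√C * √A + √C * √B) * ‖f‖ * ‖T f‖ :=
      le_of_tendsto (lp.hasSum_inner (𝕜 := ℂ) (T f) (T f)).norm
        (Filter.Eventually.of_forall fun F => hfin f (T f) F)
    rw [inner_self_eq_norm_sq_to_K] at hi
    have hi' : ‖T f‖ * ‖T f‖ ≤ (√C * √A + √C * √B) * ‖f‖ * ‖T f‖ := by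
      simpa [pow_two] using hi
    rcases (norm_nonneg (T f)).eq_or_lt with h | h
    · rw [← h]; positivity
    · exact le_of_mul_le_mul_right hi' h
  refine hK.trans ?_
  have m1 := mul_le_mul_of_nonneg_left (le_max_left √A √B) (Real.sqrt_nonneg C)
  have m2 := mul_le_mul_of_nonneg_left (le_max_right √A √B) (Real.sqrt_nonneg C)
  linarith
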